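/- arXiv:2001.02055 — 4 statements merged into one kernel-verified Lean document; each statement's English description precedes it below -/
import Mathlib

section
/- Let G be a finite abelian group, let K ≤ H ≤ G be subgroups with #K = K and #H = H, and let D ⊆ G be an H-relative difference set RDS(N,H,D,Λ) for G, where N = [G:H]. Then the quotient map π : G → G/K is injective on D, and the image π(D) is an (H/K)-relative difference set RDS(N, H/K, D, KΛ) for G/K. -/
/-- `𝒟` is an `H`-relative difference set with parameter `Λ` for the abelian group `G`:
no nonzero element of `H` is a difference of two members of `𝒟`, while every element
outside `H` is a difference of members of `𝒟` in exactly `Λ` ways. -/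
def IsRDS {G : Type*} [AddCommGroup G] (H : AddSubgroup G) (𝒟 : Set G) (Λ : ℕ) : Prop :=
  (∀ g ∈ H, g ≠ 0 →
    Nat.card {p : G × G // p.1 ∈ 𝒟 ∧ p.2 ∈ 𝒟 ∧ p.1 - p.2 = g} = 0) ∧
  (∀ g : G, g ∉ H →
    Nat.card {p : G × G // p.1 ∈ 𝒟 ∧ p.2 ∈ 𝒟 ∧ p.1 - p.2 = g} = Λ)

/-- if `K ≤ H ≤ G` are subgroups of a finite abelian group and `𝒟` is an
`H`-`RDS(N,H,D,Λ)` for `G`, then the quotient map `π : G → G/K` is injective on `𝒟` and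
`π(𝒟)` is an `(H/K)`-`RDS(N, H/K, D, KΛ)` for `G/K`. -/
theorem stmt8 {G : Type*} [AddCommGroup G] [Fintype G]
    (K H : AddSubgroup G) (hKH : K ≤ H)
    (𝒟 : Set G) (Kc Hc N D Λ : ℕ)
    (hKc : Kc = Nat.card K) (hHc : Hc = Nat.card H)
    (hN : Fintype.card G = N * Hc) (hD : D = Nat.card 𝒟)
    (hRDS : IsRDS H 𝒟 Λ) :
    Set.InjOn (QuotientAddGroup.mk' K) 𝒟 ∧
    IsRDS (H.map (QuotientAddGroup.mk' K)) ((QuotientAddGroup.mk' K) '' 𝒟) (Kc * Λ) := by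
  obtain ⟨h1, h2⟩ := hRDS
  have key : ∀ a ∈ 𝒟, ∀ b ∈ 𝒟, a - b ∈ H → a = b := by
    intro a ha b hb hab
    by_contra hne
    have h := h1 (a - b) hab (sub_ne_zero.mpr hne)
    rw [Finite.card_eq_zero_iff] at h
    exact h.false ⟨(a, b), ha, hb, rfl⟩
  have hinj : Set.InjOn (QuotientAddGroup.mk' K) 𝒟 := by
    intro a ha b hb hab
    apply key a ha b hb
    apply hKH
    rw [← QuotientAddGroup.ker_mk' K, AddMonoidHom.mem_ker, map_sub, hab, sub_self]
  refine ⟨hinj, ?_, ?_⟩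
  · rintro g ⟨h, hh, rfl⟩ hne
    rw [Finite.card_eq_zero_iff]
    refine ⟨?_⟩
    rintro ⟨⟨_, _⟩, ⟨a, ha, rfl⟩, ⟨b, hb, rfl⟩, hab⟩
    have hab' : QuotientAddGroup.mk' K a - QuotientAddGroup.mk' K b
      = QuotientAddGroup.mk' K h := hab
    have hk : a - b - h ∈ K := by
      rw [← QuotientAddGroup.ker_mk' K, AddMonoidHom.mem_ker, map_sub, map_sub, hab', sub_self]
    have hH : a - b ∈ H := by
      have := H.add_mem (hKH hk) hh
      simpa using this
    have := key a ha b hb hH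
    subst this
    exact hne (by rw [← hab', sub_self])
  · intro g hg
    obtain ⟨g, rfl⟩ := QuotientAddGroup.mk'_surjective K g
    have hgK : ∀ k : K, g + k ∉ H := by
      intro k hk
      apply hg
      refine ⟨g, ?_, rfl⟩
      exact (H.add_mem_cancel_right (hKH k.2)).mp hk
    have hcard : Nat.card (Σ k : K, {p : G × G // p.1 ∈ 𝒟 ∧ p.2 ∈ 𝒟 ∧ p.1 - p.2 = g + k})
        = Kc * Λ := by
      have : Fintype K := Fintype.ofFinite K
      rw [Nat.card_sigma, Finset.sum_congr rfl (fun (k : K) _ => h2 (g + k) (hgK k))]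
      simp [hKc]
    rw [← hcard]
    symm
    refine Nat.card_congr (Equiv.ofBijective (fun x => ⟨(QuotientAddGroup.mk' K x.2.1.1,
      QuotientAddGroup.mk' K x.2.1.2), ⟨_, x.2.2.1, rfl⟩, ⟨_, x.2.2.2.1, rfl⟩, ?_⟩) ⟨?_, ?_⟩)
    · have hk : QuotientAddGroup.mk' K (x.1 : G) = 0 := by
        rw [← AddMonoidHom.mem_ker, QuotientAddGroup.ker_mk']
        exact x.1.2
      show QuotientAddGroup.mk' K x.2.1.1 - QuotientAddGroup.mk' K x.2.1.2 = _
      rw [← map_sub, x.2.2.2.2, map_add, hk, add_zero]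
    · rintro ⟨k, ⟨a, b⟩, ha, hb, hab⟩ ⟨k', ⟨a', b'⟩, ha', hb', hab'⟩ h
      have h' := congrArg Subtype.val h
      have e1 : a = a' := hinj ha ha' (congrArg Prod.fst h')
      have e2 : b = b' := hinj hb hb' (congrArg Prod.snd h')
      subst e1 e2
      have e3 : k = k' := by
        apply Subtype.ext
        exact add_left_cancel (hab.symm.trans hab')
      subst e3
      rfl
    · rintro ⟨⟨u, v⟩, hu, hv, hab⟩
      obtain ⟨a, ha, hau⟩ := id hu
      obtain ⟨b, hb, hbv⟩ := id hv
      change _ = u at hau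
      change _ = v at hbv
      subst hau hbv
      have hab' : QuotientAddGroup.mk' K a - QuotientAddGroup.mk' K b
        = QuotientAddGroup.mk' K g := hab
      have hk : a - b - g ∈ K := by
        rw [← QuotientAddGroup.ker_mk' K, AddMonoidHom.mem_ker, map_sub, map_sub, hab', sub_self]
      exact ⟨⟨⟨_, hk⟩, ⟨(a, b), ha, hb, by simp⟩⟩, rfl⟩
end

section
/- Let Q be a prime power, J ≥ 2 an integer, F a finite field with Q^J elements, E ⊆ F its subfield with Q elements, and Tr : F → E the field trace. Let D = {x ∈ F^× : Tr(x) = 1}. Then #D = Q^{J−1}, and for every y ∈ F^×: #(D ∩ yD) = Q^{J−1} if y = 1, #(D ∩ yD) = 0 if y ∈ E^× and y ≠ 1, and #(D ∩ yD) = Q^{J−2} if y ∉ E^×. Consequently D is an E^×-relative difference set RDS((Q^J−1)/(Q−1), Q−1, Q^{J−1}, Q^{J−2}) for the multiplicative group F^×. -/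
open scoped BigOperators

/-- `𝒟` is an `H`-relative difference set with parameter `Λ` for the multiplicative
abelian group `G`: no element of `H \ {1}` is a "difference" (quotient) `d·d'⁻¹` of two
members of `𝒟`, while every element outside `H` is such a quotient in exactly `Λ` ways. -/
def IsRDSMul {G : Type*} [CommGroup G] (H : Subgroup G) (𝒟 : Set G) (Λ : ℕ) : Prop :=
  (∀ g ∈ H, g ≠ 1 →
    Nat.card {p : G × G // p.1 ∈ 𝒟 ∧ p.2 ∈ 𝒟 ∧ p.1 * p.2⁻¹ = g} = 0) ∧
  (∀ g : G, g ∉ H →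
    Nat.card {p : G × G // p.1 ∈ 𝒟 ∧ p.2 ∈ 𝒟 ∧ p.1 * p.2⁻¹ = g} = Λ)

/-- The subgroup `E^×` of `F^×` consisting of the units of `F` lying in the
subfield `E`. -/
def unitsOfSubfield {F : Type*} [Field F] (E : Subfield F) : Subgroup Fˣ where
  carrier := {u : Fˣ | (u : F) ∈ E}
  mul_mem' := fun {a b} ha hb => E.mul_mem ha hb
  one_mem' := E.one_mem
  inv_mem' := fun {a} ha => by
    simpa only [Set.mem_setOf_eq, Units.val_inv_eq_inv_val] using E.inv_mem ha

theorem aux_fiber {A B : Type*} [AddCommGroup A] [AddCommGroup B] (f : A →+ B)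
    (hf : Function.Surjective f) (b : B) :
    Nat.card {x : A // f x = b} * Nat.card B = Nat.card A := by
  have h1 : Nat.card {x : A // f x = b} = Nat.card f.ker :=
    Nat.card_congr (AddMonoidHom.fiberEquivKerOfSurjective hf b)
  have h2 := AddSubgroup.index_ker f
  rw [AddMonoidHom.range_eq_top.2 hf, AddSubgroup.card_top] at h2
  rw [h1, ← h2, AddSubgroup.card_mul_index]

theorem aux_units {F : Type*} [Field F] (P : F → Prop) (h0 : ¬ P 0) :
    Nat.card {u : Fˣ // P u} = Nat.card {x : F // P x} := by
  refine Nat.card_congr ⟨fun u => ⟨u.1, u.2⟩,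
    fun x => ⟨Units.mk0 x.1 (fun h => h0 (h ▸ x.2)), by simpa using x.2⟩, ?_, ?_⟩
  · intro u; ext; rfl
  · intro u; ext; rfl

theorem aux_nondeg {K L : Type*} [Field K] [Field L] [Algebra K L] [FiniteDimensional K L]
    [Algebra.IsSeparable K L] (a : L) (h : ∀ x, Algebra.trace K L (a * x) = 0) : a = 0 :=
  (traceForm_nondegenerate K L).1 a (fun x => by simpa [Algebra.traceForm_apply] using h x)

theorem aux_surj2 {K L : Type*} [Field K] [Field L] [Algebra K L] [FiniteDimensional K L]
    [Algebra.IsSeparable K L] (z : L) (hz : ∀ c : K, algebraMap K L c ≠ z) :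
    Function.Surjective ((Algebra.trace K L).prod
      ((Algebra.trace K L).comp (LinearMap.mulLeft K z))) := by
  rw [← LinearMap.range_eq_top]
  by_contra hne
  obtain ⟨φ, hφ, hle⟩ := Submodule.exists_le_ker_of_lt_top _ (lt_top_iff_ne_top.2 hne)
  have hφ' : ∀ p : K × K, φ p = φ (1, 0) * p.1 + φ (0, 1) * p.2 := by
    intro p
    have : p = p.1 • ((1 : K), (0 : K)) + p.2 • ((0 : K), (1 : K)) := by ext <;> simp
    conv_lhs => rw [this]
    rw [map_add, map_smul, map_smul, smul_eq_mul, smul_eq_mul, mul_comm, mul_comm p.2]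
  have key : algebraMap K L (φ (1, 0)) + algebraMap K L (φ (0, 1)) * z = 0 := by
    apply aux_nondeg (K := K)
    intro x
    have h1 := hle (LinearMap.mem_range_self _ x)
    rw [LinearMap.mem_ker, hφ'] at h1
    simp only [LinearMap.prod_apply, Pi.prod, LinearMap.comp_apply, LinearMap.mulLeft_apply] at h1
    rw [add_mul, mul_assoc, map_add, ← Algebra.smul_def, ← Algebra.smul_def, map_smul, map_smul]
    exact h1
  by_cases hb : φ (0, 1) = 0
  · rw [hb] at key
    have ha : φ (1, 0) = 0 := by simpa using key
    apply hφ
    ext <;> simp [ha, hb]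
  · apply hz (-(φ (1, 0)) / φ (0, 1))
    have hb' : algebraMap K L (φ (0, 1)) ≠ 0 := by simpa using hb
    rw [map_div₀, map_neg, div_eq_iff hb']
    linear_combination -key

theorem aux_quot {G : Type*} [CommGroup G] (D : Set G) (g : G) :
    Nat.card {p : G × G // p.1 ∈ D ∧ p.2 ∈ D ∧ p.1 * p.2⁻¹ = g} =
      Nat.card ↥(D ∩ (fun d => g * d) '' D) := by
  refine Nat.card_congr ⟨fun p => ⟨p.1.1, p.2.1, p.1.2, p.2.2.1, ?_⟩,
    fun x => ⟨(x.1, g⁻¹ * x.1), x.2.1, ?_, ?_⟩, ?_, ?_⟩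
  · simp [← p.2.2.2]
  · obtain ⟨_, d, hd, h⟩ := x.2
    simpa [← h] using hd
  · simp
  · rintro ⟨⟨a, b⟩, ha, hb, rfl⟩
    simp
  · rintro x
    rfl

/-- for a prime power `Q`, `J ≥ 2`, `F` the field with `Q^J` elements,
`E ⊆ F` its subfield with `Q` elements, `Tr` the field trace, and
`𝒟 = {x ∈ F^× : Tr x = 1}`, one has `#𝒟 = Q^{J−1}`, and
`#(𝒟 ∩ y𝒟) = Q^{J−1}` for `y = 1`, `= 0` for `y ∈ E^× \ {1}`, `= Q^{J−2}` for
`y ∉ E^×`; consequently `𝒟` is an `E^×`-`RDS((Q^J−1)/(Q−1), Q−1, Q^{J−1}, Q^{J−2})`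
for `F^×`. -/
theorem stmt10 (Q J : ℕ) (hQ : IsPrimePow Q) (hJ : 2 ≤ J)
    {F : Type*} [Field F] [Fintype F] (hF : Fintype.card F = Q ^ J)
    (E : Subfield F) (hE : Nat.card E = Q)
    (Tr : F → F) (hTr : ∀ x, Tr x = ∑ j ∈ Finset.range J, x ^ Q ^ j)
    (𝒟 : Set Fˣ) (h𝒟 : 𝒟 = {x : Fˣ | Tr (x : F) = 1}) :
    Nat.card 𝒟 = Q ^ (J - 1) ∧
    (∀ y : Fˣ, y = 1 →
      Nat.card ↥(𝒟 ∩ (fun d => y * d) '' 𝒟) = Q ^ (J - 1)) ∧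
    (∀ y : Fˣ, (y : F) ∈ E → y ≠ 1 →
      Nat.card ↥(𝒟 ∩ (fun d => y * d) '' 𝒟) = 0) ∧
    (∀ y : Fˣ, (y : F) ∉ E →
      Nat.card ↥(𝒟 ∩ (fun d => y * d) '' 𝒟) = Q ^ (J - 2)) ∧
    IsRDSMul (unitsOfSubfield E) 𝒟 (Q ^ (J - 2)) := by
  classical
  have hQ1 : 1 < Q := hQ.one_lt
  have : Fintype E := Fintype.ofFinite E
  have hEc : Fintype.card E = Q := by rw [← hE, Nat.card_eq_fintype_card]
  have hrank : Module.finrank E F = J := by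
    have h := Module.card_eq_pow_finrank (K := E) (V := F)
    rw [hF, hEc] at h
    exact (Nat.pow_right_injective hQ1 h).symm
  have hT : ∀ x, Tr x = algebraMap E F (Algebra.trace E F x) := by
    intro x
    rw [FiniteField.algebraMap_trace_eq_sum_pow, hTr, hrank, hE]
  have hT1 : ∀ x, Tr x = 1 ↔ Algebra.trace E F x = 1 := by
    intro x
    rw [hT, ← map_one (algebraMap E F), (algebraMap E F).injective.eq_iff]
  have hmem : ∀ u : Fˣ, u ∈ 𝒟 ↔ Algebra.trace E F (u : F) = 1 := by
    intro u
    rw [h𝒟, Set.mem_setOf_eq, hT1]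
  have hmem2 : ∀ y u : Fˣ, u ∈ 𝒟 ∩ (fun d => y * d) '' 𝒟 ↔
      Algebra.trace E F (u : F) = 1 ∧ Algebra.trace E F ((y : F)⁻¹ * (u : F)) = 1 := by
    intro y u
    rw [Set.mem_inter_iff, hmem]
    refine and_congr_right fun _ => ⟨?_, fun h => ⟨y⁻¹ * u, ?_, by simp⟩⟩
    · rintro ⟨d, hd, rfl⟩
      simpa using (hmem d).1 hd
    · rw [hmem]; simpa using h
  have c1 : Nat.card 𝒟 = Q ^ (J - 1) := by
    have e : Nat.card 𝒟 = Nat.card {u : Fˣ // Algebra.trace E F (u : F) = 1} :=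
      Nat.card_congr (Equiv.subtypeEquivRight hmem)
    rw [e, aux_units (fun x : F => Algebra.trace E F x = 1) (by simp)]
    have h := aux_fiber (Algebra.trace E F).toAddMonoidHom (Algebra.trace_surjective E F) 1
    rw [hE, Nat.card_eq_fintype_card (α := F), hF] at h
    apply Nat.eq_of_mul_eq_mul_right (by omega : 0 < Q)
    rw [← pow_succ, show J - 1 + 1 = J by omega]
    exact h
  have c3 : ∀ y : Fˣ, (y : F) ∈ E → y ≠ 1 →
      Nat.card ↥(𝒟 ∩ (fun d => y * d) '' 𝒟) = 0 := by
    intro y hy hy1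
    have : 𝒟 ∩ (fun d => y * d) '' 𝒟 = ∅ := by
      rw [Set.eq_empty_iff_forall_notMem]
      intro u hu
      obtain ⟨h1, h2⟩ := (hmem2 y u).1 hu
      have h3 : (y : F)⁻¹ * (u : F) = (⟨(y : F)⁻¹, E.inv_mem hy⟩ : E) • (u : F) := rfl
      rw [h3, map_smul, h1, smul_eq_mul, mul_one] at h2
      apply hy1
      have h4 := congrArg (Subtype.val) h2
      ext
      simpa using h4
    rw [this]; simp
  have c4 : ∀ y : Fˣ, (y : F) ∉ E →
      Nat.card ↥(𝒟 ∩ (fun d => y * d) '' 𝒟) = Q ^ (J - 2) := by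
    intro y hy
    have e : Nat.card ↥(𝒟 ∩ (fun d => y * d) '' 𝒟) = Nat.card {u : Fˣ //
        Algebra.trace E F (u : F) = 1 ∧ Algebra.trace E F ((y : F)⁻¹ * (u : F)) = 1} :=
      Nat.card_congr (Equiv.subtypeEquivRight (hmem2 y))
    rw [e, aux_units (fun x : F => Algebra.trace E F x = 1 ∧
      Algebra.trace E F ((y : F)⁻¹ * x) = 1) (by simp)]
    have hs := aux_surj2 (K := E) ((y : F)⁻¹) (by
      intro c hc
      apply hy
      have := E.inv_mem c.2
      rw [show (c : F) = (y : F)⁻¹ from hc, inv_inv] at this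
      exact this)
    have h := aux_fiber ((Algebra.trace E F).prod
      ((Algebra.trace E F).comp (LinearMap.mulLeft E ((y : F)⁻¹)))).toAddMonoidHom hs (1, 1)
    rw [Nat.card_prod, hE, Nat.card_eq_fintype_card (α := F), hF] at h
    apply Nat.eq_of_mul_eq_mul_right (by positivity : 0 < Q * Q)
    rw [← mul_assoc (Q ^ (J - 2)), ← pow_succ, ← pow_succ, show J - 2 + 1 + 1 = J by omega, ← h]
    congr 1
    refine Nat.card_congr (Equiv.subtypeEquivRight fun x => ?_)
    exact Prod.mk_inj.symm
  refine ⟨c1, ?_, c3, c4, ?_, ?_⟩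
  · rintro y rfl
    simpa using c1
  · intro g hg hg1
    rw [aux_quot]
    exact c3 g hg hg1
  · intro g hg
    rw [aux_quot]
    exact c4 g hg
end

section
/- Let D₁ ≤ N₁ and D₂ ≤ N₂ be positive integers with N₁, N₂ ≥ 2 satisfying (N₁−D₁)(N₂−1) = (N₂−D₂)·D₁(N₁−1), and set D₃ = D₁D₂ and N₃ = N₁N₂. If (N₂−1) divides D₂(N₂−D₂) and D₃ divides (N₃−D₃)(N₃−1), then D₁ divides N₁. -/
/-- if `D₁ ≤ N₁`, `D₂ ≤ N₂` are positive integers with `N₁, N₂ ≥ 2`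
satisfying `(N₁−D₁)(N₂−1) = (N₂−D₂)·D₁(N₁−1)` (i.e. the Welch-bound consistency
condition), `D₃ = D₁D₂`, `N₃ = N₁N₂`, and if `(N₂−1) ∣ D₂(N₂−D₂)` and
`D₃ ∣ (N₃−D₃)(N₃−1)`, then `D₁ ∣ N₁`. -/
theorem stmt13 (D₁ N₁ D₂ N₂ : ℕ)
    (hD₁ : 0 < D₁) (h₁ : D₁ ≤ N₁) (hN₁ : 2 ≤ N₁)
    (hD₂ : 0 < D₂) (h₂ : D₂ ≤ N₂) (hN₂ : 2 ≤ N₂)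
    (hcons : (N₁ - D₁) * (N₂ - 1) = (N₂ - D₂) * (D₁ * (N₁ - 1)))
    (hdvd₁ : (N₂ - 1) ∣ D₂ * (N₂ - D₂))
    (hdvd₂ : (D₁ * D₂) ∣ (N₁ * N₂ - D₁ * D₂) * (N₁ * N₂ - 1)) :
    D₁ ∣ N₁ := by
  have hprod : D₁ * D₂ ≤ N₁ * N₂ := Nat.mul_le_mul h₁ h₂
  have hprod1 : 1 ≤ N₁ * N₂ := Nat.mul_pos (by omega) (by omega)
  have c1 : ((N₁:ℤ) - D₁) * (N₂ - 1) = (N₂ - D₂) * (D₁ * (N₁ - 1)) := by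
    have := congrArg (Nat.cast : ℕ → ℤ) hcons
    push_cast [Nat.cast_sub h₁, Nat.cast_sub h₂, Nat.cast_sub (show 1 ≤ N₁ by omega),
      Nat.cast_sub (show 1 ≤ N₂ by omega)] at this
    exact this
  have c2 : ((N₂:ℤ) - 1) ∣ D₂ * (N₂ - D₂) := by
    have := Int.natCast_dvd_natCast.mpr hdvd₁
    push_cast [Nat.cast_sub h₂, Nat.cast_sub (show 1 ≤ N₂ by omega)] at this
    exact this
  have c3 : ((D₁:ℤ) * D₂) ∣ (N₁ * N₂ - D₁ * D₂) * (N₁ * N₂ - 1) := by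
    have := Int.natCast_dvd_natCast.mpr hdvd₂
    push_cast [Nat.cast_sub hprod, Nat.cast_sub hprod1] at this
    exact this
  have c4 : ((D₁:ℤ) * D₂) ∣ N₁ * N₂ * (N₁ * N₂ - 1) := by
    obtain ⟨t, ht⟩ := c3
    exact ⟨t + (N₁ * N₂ - 1), by linear_combination ht⟩
  obtain ⟨g, a, b, hg, hab, rfl, rfl⟩ :
      ∃ g a b : ℕ, 0 < g ∧ Nat.Coprime a b ∧ N₁ = g * a ∧ D₁ = g * b := by
    obtain ⟨a, b, hab, h3, h4⟩ := Nat.exists_coprime N₁ D₁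
    exact ⟨Nat.gcd N₁ D₁, a, b, Nat.gcd_pos_of_pos_right _ hD₁, hab,
      by rw [mul_comm]; exact h3, by rw [mul_comm]; exact h4⟩
  have hgz : (g:ℤ) ≠ 0 := by exact_mod_cast hg.ne'
  have habz : IsCoprime (b:ℤ) (a:ℤ) := (Nat.isCoprime_iff_coprime.mpr hab).symm
  push_cast at c1 c4
  have e1 : ((a:ℤ) - b) * (N₂ - 1) = (N₂ - D₂) * (b * (g * a - 1)) := by
    apply mul_left_cancel₀ hgz
    linear_combination c1
  have e4 : (b:ℤ) * D₂ ∣ a * N₂ * (g * a * N₂ - 1) := by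
    apply Int.dvd_of_mul_dvd_mul_left hgz
    convert c4 using 1 <;> ring
  by_cases hb : b = 1
  · subst hb; simp
  exfalso
  obtain ⟨p, hp, hpb⟩ := Nat.exists_prime_and_dvd hb
  have hpz : Prime (p:ℤ) := Nat.prime_iff_prime_int.mp hp
  have hpbz : (p:ℤ) ∣ b := Int.natCast_dvd_natCast.mpr hpb
  have hpa : ¬ (p:ℤ) ∣ a := fun h => hpz.not_isUnit (habz.isUnit_of_dvd' hpbz h)
  have hbn : (b:ℤ) ∣ N₂ - 1 := by
    have h : (b:ℤ) ∣ a * (N₂ - 1) :=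
      ⟨(N₂ - D₂) * (g * a - 1) + (N₂ - 1), by linear_combination e1⟩
    exact habz.dvd_of_dvd_mul_left h
  have hn1 : (N₂:ℤ) - 1 ≠ 0 := by
    have : (2:ℤ) ≤ N₂ := by exact_mod_cast hN₂
    omega
  have hbd : (b:ℤ) ∣ D₂ := by
    obtain ⟨L, hL⟩ := c2
    have h : ((a:ℤ) - b) * D₂ = L * (b * (g * a - 1)) := by
      apply mul_left_cancel₀ hn1
      linear_combination (D₂:ℤ) * e1 + (b * (g * a - 1) : ℤ) * hL
    have h : (b:ℤ) ∣ a * D₂ := ⟨L * (g * a - 1) + D₂, by linear_combination h⟩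
    exact habz.dvd_of_dvd_mul_left h
  have hpn1 := hpbz.trans hbn
  have hpd := hpbz.trans hbd
  have hpn : ¬ (p:ℤ) ∣ N₂ := fun h => hpz.not_dvd_one (by simpa using dvd_sub h hpn1)
  have hpnd : ¬ (p:ℤ) ∣ N₂ - D₂ := fun h => hpn (by simpa using dvd_add h hpd)
  have hpab : ¬ (p:ℤ) ∣ a - b := fun h => hpa (by simpa using dvd_add h hpbz)
  have hpan : ¬ (p:ℤ) ∣ a * N₂ := fun h => (hpz.dvd_or_dvd h).elim hpa hpn
  have key : ∀ k : ℕ, (p:ℤ) ^ k ∣ N₂ - 1 := by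
    intro k
    induction k with
    | zero => simp
    | succ k ih =>
      have s1 : (p:ℤ) ^ k ∣ D₂ := hpz.pow_dvd_of_dvd_mul_right k hpnd (ih.trans c2)
      have s2 : (p:ℤ) ^ k ∣ g * a * N₂ - 1 :=
        hpz.pow_dvd_of_dvd_mul_left k hpan ((s1.mul_left _).trans e4)
      have s3 : (p:ℤ) ^ k ∣ g * a - 1 := by
        apply hpz.pow_dvd_of_dvd_mul_left k hpn
        have := dvd_sub s2 ih
        convert this using 1
        ring
      apply hpz.pow_dvd_of_dvd_mul_left (k+1) hpab
      rw [e1, pow_succ']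
      exact (mul_dvd_mul hpbz s3).mul_left _
  have hN : p ^ N₂ ∣ N₂ - 1 := by
    have := key N₂
    rw [← Int.natCast_dvd_natCast]
    push_cast [Nat.cast_sub (show 1 ≤ N₂ by omega)]
    exact this
  have := Nat.le_of_dvd (by omega) hN
  have := Nat.lt_pow_self hp.one_lt (n := N₂)
  omega
end

section
/- Let D < N < 2D be positive integers such that N−D divides D(N−1), let Q = D(N−1)/(N−D), and for an integer J ≥ 2 set D^{(J)} = D·Q^{J−1} and N^{(J)} = N·(Q^J−1)/(Q−1). Then: (1) N^{(J)} − D^{(J)} = D·N·(Q^{J−1}−1)/(Q−1) + (N−D); (2) D^{(J)}(N^{(J)}−1) = Q^J·(N^{(J)}−D^{(J)}); (3) D^{(J)}(N^{(J)}−D^{(J)}) = D²·Q^{J−2}·(N^{(J)}−1); (4) D^{(J)} does not divide (N^{(J)}−D^{(J)})(N^{(J)}−1); and (5) D^{(J)} + 1 < N^{(J)} < 2·D^{(J)}. -/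
/-- let `D < N < 2D` with `N−D ∣ D(N−1)`, `Q = D(N−1)/(N−D)`, `J ≥ 2`,
`D⁽ᴶ⁾ = D·Q^{J−1}` and `N⁽ᴶ⁾ = N·(Q^J−1)/(Q−1)`. Then
(1) `N⁽ᴶ⁾ − D⁽ᴶ⁾ = D·N·(Q^{J−1}−1)/(Q−1) + (N−D)`;
(2) `D⁽ᴶ⁾(N⁽ᴶ⁾−1) = Q^J·(N⁽ᴶ⁾−D⁽ᴶ⁾)`;
(3) `D⁽ᴶ⁾(N⁽ᴶ⁾−D⁽ᴶ⁾) = D²·Q^{J−2}·(N⁽ᴶ⁾−1)`;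
(4) `D⁽ᴶ⁾` does not divide `(N⁽ᴶ⁾−D⁽ᴶ⁾)(N⁽ᴶ⁾−1)`;
(5) `D⁽ᴶ⁾ + 1 < N⁽ᴶ⁾ < 2·D⁽ᴶ⁾`. -/
theorem stmt15 (D N Q J : ℕ) (h1 : D < N) (h2 : N < 2 * D)
    (hdvd : (N - D) ∣ D * (N - 1)) (hQ : Q = D * (N - 1) / (N - D)) (hJ : 2 ≤ J)
    (DJ NJ : ℕ) (hDJ : DJ = D * Q ^ (J - 1))
    (hNJ : NJ = N * ((Q ^ J - 1) / (Q - 1))) :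
    NJ - DJ = D * N * ((Q ^ (J - 1) - 1) / (Q - 1)) + (N - D) ∧
    DJ * (NJ - 1) = Q ^ J * (NJ - DJ) ∧
    DJ * (NJ - DJ) = D ^ 2 * Q ^ (J - 2) * (NJ - 1) ∧
    ¬ DJ ∣ (NJ - DJ) * (NJ - 1) ∧
    DJ + 1 < NJ ∧ NJ < 2 * DJ := by
  obtain ⟨e, rfl⟩ : ∃ e, N = D + e := ⟨N - D, by omega⟩
  obtain ⟨k, rfl⟩ : ∃ k, J = k + 2 := ⟨J - 2, by omega⟩
  have he : 0 < e := by omega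
  have heD : e < D := by omega
  obtain ⟨d, rfl⟩ : ∃ d, D = d + 1 := ⟨D - 1, by omega⟩
  have hs : d + 1 + e - (d + 1) = e := by omega
  have hs1 : d + 1 + e - 1 = d + e := by omega
  rw [hs, hs1] at hdvd hQ
  have hQe : Q * e = (d + 1) * (d + e) := by rw [hQ]; exact Nat.div_mul_cancel hdvd
  have hQN : d + 1 + e + 1 ≤ Q := by
    refine Nat.le_of_mul_le_mul_right ?_ he
    rw [hQe]
    have : e ≤ d := by omega
    nlinarith
  clear hQ hdvd
  obtain ⟨q, rfl⟩ : ∃ q, Q = q + 1 := ⟨Q - 1, by omega⟩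
  have hq : 0 < q := by omega
  have hS : ∃ S, (q + 1) ^ (k + 1) = 1 + q * S := by
    have h : (q + 1) ≡ 1 [MOD q] := by simp [Nat.ModEq]
    have h3 := (Nat.modEq_iff_dvd' (Nat.one_le_pow (k+1) (q+1) (by omega))).1
      (by simpa using (h.pow (k+1)).symm)
    obtain ⟨S, hS⟩ := h3
    have := Nat.one_le_pow (k+1) (q+1) (by omega)
    exact ⟨S, by omega⟩
  obtain ⟨S, hS⟩ := hS
  have hSpos : 0 < S := by
    rcases Nat.eq_zero_or_pos S with h | h
    · subst h
      have : 1 < (q + 1) ^ (k + 1) := Nat.one_lt_pow (by omega) (by omega)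
      omega
    · exact h
  have e1 : k + 2 - 1 = k + 1 := by omega
  have e2 : k + 2 - 2 = k := by omega
  have e3 : q + 1 - 1 = q := by omega
  have hT : (q + 1) ^ (k + 2) = 1 + q * (1 + (q + 1) * S) := by
    rw [pow_succ, hS]; ring
  have d1 : ((q + 1) ^ (k + 1) - 1) / q = S := by
    rw [hS, Nat.add_sub_cancel_left, Nat.mul_div_cancel_left _ hq]
  have d2 : ((q + 1) ^ (k + 2) - 1) / q = 1 + (q + 1) * S := by
    rw [hT, Nat.add_sub_cancel_left, Nat.mul_div_cancel_left _ hq]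
  rw [e3, d2] at hNJ
  rw [e1] at hDJ
  rw [e1, e2, e3, d1, hs]
  have hDJ' : DJ = (d + 1) * (1 + q * S) := by rw [hDJ, hS]
  have hsum : NJ = DJ + ((d + 1) * (d + 1 + e) * S + e) := by
    rw [hNJ, hDJ']; linear_combination S * hQe
  have hN1 : NJ = (d + e + (d + 1 + e) * (q + 1) * S) + 1 := by
    rw [hNJ]; ring
  have f1 : NJ - DJ = (d + 1) * (d + 1 + e) * S + e := by omega
  have f2 : NJ - 1 = d + e + (d + 1 + e) * (q + 1) * S := by omega
  have key : (d + 1) * (NJ - 1) = (q + 1) * (NJ - DJ) := by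
    rw [f1, f2]; linear_combination hQe.symm
  have g3 : DJ * (NJ - DJ) = (d + 1) ^ 2 * (q + 1) ^ k * (NJ - 1) := by
    generalize NJ - DJ = A at key ⊢
    generalize NJ - 1 = B at key ⊢
    rw [hDJ, pow_succ]
    linear_combination (d + 1) * (q + 1) ^ k * key.symm
  refine ⟨by rw [f1], ?_, g3, ?_, ?_, ?_⟩
  · generalize NJ - DJ = A at key ⊢
    generalize NJ - 1 = B at key ⊢
    rw [hDJ, pow_succ _ (k+1)]
    linear_combination (q + 1) ^ (k + 1) * key
  · rintro ⟨c, hc⟩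
    have h4 : (NJ - DJ) ^ 2 = (d + 1) ^ 2 * ((q + 1) ^ k * c) := by
      refine Nat.eq_of_mul_eq_mul_left (show 0 < q + 1 by omega) ?_
      calc (q + 1) * (NJ - DJ) ^ 2 = ((q + 1) * (NJ - DJ)) * (NJ - DJ) := by ring
        _ = (d + 1) * ((NJ - DJ) * (NJ - 1)) := by rw [← key]; ring
        _ = _ := by rw [hc, hDJ]; ring
    have h5 : (d + 1) ∣ NJ - DJ := (Nat.pow_dvd_pow_iff (by norm_num)).1 ⟨_, h4⟩
    rw [f1, mul_assoc] at h5
    have h6 := (Nat.dvd_add_right (Dvd.intro _ rfl)).1 h5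
    have := Nat.le_of_dvd he h6
    omega
  · have : 0 < (d + 1) * (d + 1 + e) * S := by positivity
    omega
  · have : (d + 1) * (d + 1 + e) * S ≤ (d + 1) * q * S := by gcongr; omega
    have h7 : DJ = (d + 1) + (d + 1) * q * S := by rw [hDJ']; ring
    omega
end
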